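/- arXiv:1901.08446 — 3 statements merged into one kernel-verified Lean document; each statement's English description precedes it below -/
import Mathlib

section
/- Let L/K be a finite Galois extension of fields of characteristic p > 0 whose Galois group G is elementary abelian, and let σ_1, …, σ_n be elements of G forming an F_p-basis of G. Suppose y ∈ L and w_1, …, w_n ∈ K satisfy σ_j(y) = y + w_j for j = 1, …, n, and let W ⊆ K be the F_p-span of w_1, …, w_n. Then the element P_W(y) = ∏_{a ∈ W} (y − a) is fixed by every element of Gal(L/K); in particular P_W(y) ∈ K. -/
/-! Each generator of the Galois group translates `y` by an element of the additive group `W`,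
and such a translation only permutes the factors of `∏_{a ∈ W} (y - a)`. The stabilizer of the
product is therefore a subgroup containing a set of generators, that is, the whole group. -/

theorem prod_add_map_sub_map {M A F S : Type*} [AddGroup M] [CommRing A] [FunLike F M A]
    [AddMonoidHomClass F M A] [SetLike S M] [AddSubgroupClass S M] {W : S}
    (hW : (W : Set M).Finite) {w : M} (hw : w ∈ W) (f : F) (y : A) :
    ∏ a ∈ hW.toFinset, (y + f w - f a) = ∏ a ∈ hW.toFinset, (y - f a) := by
  refine Finset.prod_equiv (Equiv.subRight w) (fun a => ?_) (fun a _ => ?_)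
  · simp only [Set.Finite.mem_toFinset, SetLike.mem_coe, Equiv.subRight_apply, sub_eq_add_neg]
    exact (add_mem_cancel_right (neg_mem hw)).symm
  · rw [Equiv.subRight_apply, map_sub, sub_sub_eq_add_sub]

theorem smul_prod_sub_algebraMap {G R A S : Type*} [CommRing R] [CommRing A] [Algebra R A]
    [Monoid G] [MulSemiringAction G A] [SMulCommClass G R A] [SetLike S R]
    [AddSubgroupClass S R] {W : S} (hW : (W : Set R).Finite) {w : R} (hw : w ∈ W) {g : G} {y : A}
    (hg : g • y = y + algebraMap R A w) :
    g • ∏ a ∈ hW.toFinset, (y - algebraMap R A a) =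
      ∏ a ∈ hW.toFinset, (y - algebraMap R A a) :=
  calc
    g • ∏ a ∈ hW.toFinset, (y - algebraMap R A a)
      = ∏ a ∈ hW.toFinset, (y + algebraMap R A w - algebraMap R A a) := by
        simp only [Finset.smul_prod', smul_sub, smul_algebraMap, hg]
    _ = ∏ a ∈ hW.toFinset, (y - algebraMap R A a) := prod_add_map_sub_map hW hw _ y

theorem smul_eq_self_of_closure_eq_top {G X : Type*} [Group G] [MulAction G X] {s : Set G}
    (hs : Subgroup.closure s = ⊤) {x : X} (hx : ∀ g ∈ s, g • x = x) (g : G) : g • x = x := by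
  have closure_le : Subgroup.closure s ≤ MulAction.stabilizer G x :=
    (Subgroup.closure_le _).2 hx
  exact closure_le (hs ▸ Subgroup.mem_top g)

theorem closure_range_eq_top_of_forall_exists_prod_pow {G : Type*} [Group G] {n : ℕ}
    {σ : Fin n → G} (hσ : ∀ g, ∃ e : Fin n → ℕ, (List.ofFn fun j => σ j ^ e j).prod = g) :
    Subgroup.closure (Set.range σ) = ⊤ := by
  refine (Subgroup.eq_top_iff' _).2 fun g => ?_
  obtain ⟨e, rfl⟩ := hσ g
  refine Subgroup.list_prod_mem _ (List.forall_mem_ofFn_iff.2 fun j => ?_)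
  exact Subgroup.pow_mem _ (Subgroup.subset_closure (Set.mem_range_self j)) _

theorem subspace_polynomial_value_is_invariant_general {G R A S : Type*} [CommRing R]
    [CommRing A] [Algebra R A] [Group G] [MulSemiringAction G A] [SMulCommClass G R A]
    [Algebra.IsInvariant R A G] [SetLike S R] [AddSubgroupClass S R] {W : S}
    (hW : (W : Set R).Finite) {s : Set G} (hs : Subgroup.closure s = ⊤) {y : A}
    (hy : ∀ g ∈ s, ∃ w ∈ W, g • y = y + algebraMap R A w) :
    (∀ g : G, g • ∏ a ∈ hW.toFinset, (y - algebraMap R A a) =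
      ∏ a ∈ hW.toFinset, (y - algebraMap R A a)) ∧
    ∏ a ∈ hW.toFinset, (y - algebraMap R A a) ∈ Set.range (algebraMap R A) := by
  have fixed (g : G) : g • ∏ a ∈ hW.toFinset, (y - algebraMap R A a) =
      ∏ a ∈ hW.toFinset, (y - algebraMap R A a) := by
    refine smul_eq_self_of_closure_eq_top hs (fun g hg => ?_) g
    obtain ⟨w, hw, hgy⟩ := hy g hg
    exact smul_prod_sub_algebraMap hW hw hgy
  exact ⟨fixed, Algebra.IsInvariant.isInvariant (G := G) _ fixed⟩

/-- Let `L/K` be a finite Galois extension of fields of characteristic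
`p > 0` whose Galois group is elementary abelian with `𝔽_p`-basis `σ₁, …, σₙ`.  If
`y ∈ L` and `w₁, …, wₙ ∈ K` satisfy `σⱼ(y) = y + wⱼ`, and `W ⊆ K` is the `𝔽_p`-span of
the `wⱼ`, then `P_W(y) = ∏_{a ∈ W} (y - a)` is fixed by every element of `Gal(L/K)`;
in particular it lies in `K`. -/
theorem subspace_polynomial_value_is_invariant
    (p : ℕ) [Fact p.Prime]
    (K L : Type*) [Field K] [Field L] [Algebra K L]
    [CharP K p] [CharP L p] [Module (ZMod p) K]
    [FiniteDimensional K L] [IsGalois K L]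
    (n : ℕ) (σ : Fin n → (L ≃ₐ[K] L))
    -- the Galois group is elementary abelian …
    (hcomm : ∀ g h : L ≃ₐ[K] L, g * h = h * g)
    (helem : ∀ g : L ≃ₐ[K] L, g ^ p = 1)
    -- … and `σ₁, …, σₙ` form an `𝔽_p`-basis of it
    (hbasis : Function.Bijective
      (fun ν : Fin n → ZMod p => (List.ofFn fun j => σ j ^ (ν j).val).prod))
    (y : L) (w : Fin n → K)
    (hy : ∀ j, σ j y = y + algebraMap K L (w j))
    (hW : (Submodule.span (ZMod p) (Set.range w) : Set K).Finite) :
    (∀ g : L ≃ₐ[K] L,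
        g (∏ a ∈ hW.toFinset, (y - algebraMap K L a))
          = ∏ a ∈ hW.toFinset, (y - algebraMap K L a)) ∧
    (∏ a ∈ hW.toFinset, (y - algebraMap K L a)) ∈ Set.range (algebraMap K L) := by
  have generates : Subgroup.closure (Set.range σ) = ⊤ :=
    closure_range_eq_top_of_forall_exists_prod_pow fun g =>
      let ⟨ν, hν⟩ := hbasis.surjective g
      ⟨fun j => (ν j).val, hν⟩
  exact subspace_polynomial_value_is_invariant_general hW generates <|
    Set.forall_mem_range.2 fun j => ⟨w j, Submodule.subset_span (Set.mem_range_self j), hy j⟩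
end

section
/- Let L/K be a finite Galois extension of fields of characteristic p > 0 whose Galois group G is elementary abelian of order p^n, with σ_1, …, σ_n an F_p-basis of G. Suppose y ∈ L and w_1, …, w_n ∈ K are linearly independent over F_p and satisfy σ_j(y) = y + w_j for all j, and let W be the F_p-span of w_1, …, w_n. Then the monic polynomial A(X) = ∏_{a ∈ W} (X − a) − ∏_{a ∈ W} (y − a) has coefficients in K, has degree p^n = [L : K], is the minimal polynomial of y over K, and L = K(y). -/
open Polynomial

/-!
The Galois conjugates of `y` are exactly the translates `y + a` with `a ∈ W`, because
`∏ σⱼ ^ νⱼ` sends `y` to `y + ∑ νⱼ wⱼ`; hence the minimal polynomial of `y` is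
`∏_{a ∈ W} (X - (y + a))`.  On the other hand `P_W` is invariant under translation by `W`, so
`P_W(X) - P_W(y)` vanishes at every `y + a`.  Both polynomials are monic of degree `|W|`, and they
agree at `|W|` points, so they are equal.  Finally `|W| = p ^ n = [L : K]` forces `L = K(y)`.
-/

section Translation

variable {G A : Type*} [Monoid G]

theorem pow_smul_eq_add_nsmul [AddMonoid A] [DistribMulAction G A] {g : G} {y a : A}
    (hy : g • y = y + a) (ha : g • a = a) (m : ℕ) : g ^ m • y = y + m • a := by
  induction m with
  | zero => simp
  | succ m ih => rw [pow_succ', mul_smul, ih, smul_add, hy, smul_comm, ha, add_assoc, succ_nsmul']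

theorem prod_ofFn_smul_eq_add_sum [AddCommMonoid A] [DistribMulAction G A] {n : ℕ}
    {g : Fin n → G} {y : A} {a : Fin n → A} (hy : ∀ j, g j • y = y + a j)
    (ha : ∀ i j, g i • a j = a j) : (List.ofFn g).prod • y = y + ∑ j, a j := by
  induction n with
  | zero => simp
  | succ n ih =>
    have ih_tail : (List.ofFn fun j => g j.succ).prod • y = y + ∑ j : Fin n, a j.succ :=
      ih (fun j => hy j.succ) fun i j => ha i.succ j.succ
    rw [List.ofFn_succ, List.prod_cons, mul_smul, ih_tail, smul_add, hy, Finset.smul_sum,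
      Fin.sum_univ_succ, add_assoc]
    simp only [ha]

theorem prod_ofFn_pow_smul_eq_add_algebraMap {R B : Type*} [CommSemiring R] [Semiring B]
    [Algebra R B] [MulSemiringAction G B] [SMulCommClass G R B] {n : ℕ} {g : Fin n → G} {y : B}
    {w : Fin n → R} (hy : ∀ j, g j • y = y + algebraMap R B (w j)) (m : Fin n → ℕ) :
    (List.ofFn fun j => g j ^ m j).prod • y = y + algebraMap R B (∑ j, m j • w j) := by
  rw [map_sum]
  refine prod_ofFn_smul_eq_add_sum (fun j => ?_) fun i j => smul_algebraMap _ _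
  rw [map_nsmul, pow_smul_eq_add_nsmul (hy j) (smul_algebraMap _ _)]

theorem orbit_eq_image_add_span {R B : Type*} [CommSemiring R] [Semiring B]
    [Algebra R B] [MulSemiringAction G B] [SMulCommClass G R B] {q : ℕ} [NeZero q]
    [Module (ZMod q) R] {n : ℕ} {g : Fin n → G}
    (hg : Function.Surjective fun ν : Fin n → ZMod q => (List.ofFn fun j => g j ^ (ν j).val).prod)
    {y : B} {w : Fin n → R} (hy : ∀ j, g j • y = y + algebraMap R B (w j)) :
    MulAction.orbit G y =
      (fun a => y + algebraMap R B a) '' Submodule.span (ZMod q) (Set.range w) := by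
  have hspan : (Submodule.span (ZMod q) (Set.range w) : Set R) =
      Set.range fun ν : Fin n → ZMod q => ∑ j, ν j • w j := by
    ext a
    exact Submodule.mem_span_range_iff_exists_fun (ZMod q)
  rw [hspan, ← Set.range_comp, MulAction.orbit, ← hg.range_comp]
  refine congrArg Set.range (funext fun ν => ?_)
  refine (prod_ofFn_pow_smul_eq_add_algebraMap hy _).trans ?_
  simp only [Function.comp_apply, ← Nat.cast_smul_eq_nsmul (ZMod q), ZMod.natCast_zmod_val]

end Translation

section SubspacePolynomial

open Lagrange

variable {M R : Type*} [AddGroup M] [CommRing R] {V : AddSubgroup M}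

theorem eval_nodal_add_of_mem (hV : (V : Set M).Finite) (f : M →+ R) {b : M} (hb : b ∈ V)
    (y : R) : (nodal hV.toFinset f).eval (y + f b) = (nodal hV.toFinset f).eval y := by
  rw [eval_nodal, eval_nodal]
  refine Finset.prod_equiv (Equiv.subRight b) (fun a => ?_) fun a _ => ?_
  · simp [sub_eq_add_neg, V.add_mem_cancel_right (V.neg_mem hb)]
  · rw [Equiv.subRight_apply, map_sub]
    ring

theorem nodal_sub_C_eval_eq_nodal_add [IsDomain R] (hV : (V : Set M).Finite) {f : M →+ R}
    (hf : Function.Injective f) (y : R) :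
    nodal hV.toFinset f - C ((nodal hV.toFinset f).eval y) =
      nodal hV.toFinset fun a => y + f a := by
  have hdeg : (C ((nodal hV.toFinset f).eval y)).degree < (nodal hV.toFinset f).degree := by
    rw [degree_nodal]
    refine degree_C_le.trans_lt ?_
    exact_mod_cast Finset.card_pos.mpr ⟨0, hV.mem_toFinset.mpr V.zero_mem⟩
  refine eq_of_degree_le_of_eval_index_eq (v := fun a => y + f a) hV.toFinset
    ((add_right_injective y).comp hf).injOn ?_ ?_ ?_ fun a ha => ?_
  · rw [degree_sub_eq_left_of_degree_lt hdeg, degree_nodal]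
  · rw [degree_sub_eq_left_of_degree_lt hdeg, degree_nodal, degree_nodal]
  · rw [nodal_monic.sub_of_left hdeg, nodal_monic]
  · rw [eval_nodal_at_node (v := fun a => y + f a) ha, eval_sub, eval_C,
      eval_nodal_add_of_mem hV f (hV.mem_toFinset.mp ha), sub_self]

end SubspacePolynomial

section Galois

open Lagrange

variable {K L : Type*} [Field K] [Field L] [Algebra K L] [IsGalois K L]

theorem minpoly_map_eq_nodal_of_orbit_eq {ι : Type*} {s : Finset ι} {v : ι → L}
    (hv : Set.InjOn v s) {y : L} (horbit : MulAction.orbit Gal(L/K) y = v '' s) :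
    (minpoly K y).map (algebraMap K L) = nodal s v := by
  classical
  have hcarrier : (ConjRootClass.mk K y).carrier = (s.image v : Finset L) := by
    rw [Finset.coe_image, ← horbit]
    ext z
    rw [ConjRootClass.mem_carrier, ConjRootClass.mk_eq_mk, isConjRoot_iff_orbitRel,
      MulAction.orbitRel_apply]
  have : Fintype (ConjRootClass.mk K y).carrier := Fintype.ofFinset (s.image v) (by simp [hcarrier])
  rw [← ConjRootClass.minpoly_mk, ConjRootClass.minpoly.map_eq_prod]
  simp only [hcarrier, Finset.toFinset_coe]
  rw [Finset.prod_image hv, nodal_eq]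

theorem minpoly_map_eq_nodal_sub_C_eval {V : AddSubgroup K} (hV : (V : Set K).Finite) {y : L}
    (horbit : MulAction.orbit Gal(L/K) y = (fun a => y + algebraMap K L a) '' V) :
    (minpoly K y).map (algebraMap K L) =
      nodal hV.toFinset (algebraMap K L) - C ((nodal hV.toFinset (algebraMap K L)).eval y) := by
  have hinj : Function.Injective (algebraMap K L) := (algebraMap K L).injective
  rw [minpoly_map_eq_nodal_of_orbit_eq ((add_right_injective y).comp hinj).injOn
    (by rw [hV.coe_toFinset]; exact horbit)]
  exact (nodal_sub_C_eval_eq_nodal_add hV (f := (algebraMap K L : K →+ L)) hinj y).symm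

end Galois

theorem natCard_span_range_of_linearIndependent {R M ι : Type*} [Semiring R] [AddCommMonoid M]
    [Module R M] [Finite ι] {v : ι → M} (hv : LinearIndependent R v) :
    Nat.card (Submodule.span R (Set.range v)) = Nat.card R ^ Nat.card ι := by
  rw [Nat.card_congr (Module.Basis.span hv).equivFun.toEquiv, Nat.card_fun]

/-- Let `L/K` be a finite Galois extension of fields of characteristic
`p > 0` whose Galois group is elementary abelian of order `p^n`, with `𝔽_p`-basis
`σ₁, …, σₙ`.  Suppose `y ∈ L` and `w₁, …, wₙ ∈ K` are linearly independent over `𝔽_p`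
with `σⱼ(y) = y + wⱼ`, and let `W` be the `𝔽_p`-span of the `wⱼ`.  Then the monic
polynomial `A(X) = ∏_{a ∈ W}(X - a) - ∏_{a ∈ W}(y - a)` has coefficients in `K`, has
degree `p^n = [L : K]`, is the minimal polynomial of `y` over `K`, and `L = K(y)`. -/
theorem subspace_polynomial_minpoly
    (p : ℕ) [Fact p.Prime]
    (K L : Type*) [Field K] [Field L] [Algebra K L]
    [CharP K p] [CharP L p] [Module (ZMod p) K]
    [FiniteDimensional K L] [IsGalois K L]
    (n : ℕ) (σ : Fin n → (L ≃ₐ[K] L))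
    -- the Galois group is elementary abelian of order `p^n` …
    (hcard : Nat.card (L ≃ₐ[K] L) = p ^ n)
    (hcomm : ∀ g h : L ≃ₐ[K] L, g * h = h * g)
    (helem : ∀ g : L ≃ₐ[K] L, g ^ p = 1)
    -- … and `σ₁, …, σₙ` form an `𝔽_p`-basis of it
    (hbasis : Function.Bijective
      (fun ν : Fin n → ZMod p => (List.ofFn fun j => σ j ^ (ν j).val).prod))
    (y : L) (w : Fin n → K) (hw : LinearIndependent (ZMod p) w)
    (hy : ∀ j, σ j y = y + algebraMap K L (w j))
    (hW : (Submodule.span (ZMod p) (Set.range w) : Set K).Finite) :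
    (∀ i : ℕ,
        (∏ a ∈ hW.toFinset, (X - C (algebraMap K L a))
            - C (∏ a ∈ hW.toFinset, (y - algebraMap K L a))).coeff i
          ∈ Set.range (algebraMap K L)) ∧
    (∏ a ∈ hW.toFinset, (X - C (algebraMap K L a))
        - C (∏ a ∈ hW.toFinset, (y - algebraMap K L a))).Monic ∧
    (∏ a ∈ hW.toFinset, (X - C (algebraMap K L a))
        - C (∏ a ∈ hW.toFinset, (y - algebraMap K L a))).natDegree = p ^ n ∧
    Module.finrank K L = p ^ n ∧
    (minpoly K y).map (algebraMap K L)
      = ∏ a ∈ hW.toFinset, (X - C (algebraMap K L a))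
          - C (∏ a ∈ hW.toFinset, (y - algebraMap K L a)) ∧
    IntermediateField.adjoin K {y} = ⊤ := by
  have horbit : MulAction.orbit Gal(L/K) y =
      (fun a => y + algebraMap K L a) '' Submodule.span (ZMod p) (Set.range w) :=
    orbit_eq_image_add_span hbasis.surjective hy
  have hminpoly : (minpoly K y).map (algebraMap K L) =
      ∏ a ∈ hW.toFinset, (X - C (algebraMap K L a))
        - C (∏ a ∈ hW.toFinset, (y - algebraMap K L a)) := by
    rw [← Lagrange.eval_nodal (v := algebraMap K L)]
    exact minpoly_map_eq_nodal_sub_C_eval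
      (V := (Submodule.span (ZMod p) (Set.range w)).toAddSubgroup) hW horbit
  have hdegree : (minpoly K y).natDegree = p ^ n := by
    rw [← natDegree_map (algebraMap K L), hminpoly, natDegree_sub_C,
      natDegree_finsetProd_X_sub_C_eq_card, ← Nat.card_eq_card_finite_toFinset hW]
    exact (natCard_span_range_of_linearIndependent hw).trans (by simp)
  have hfinrank : Module.finrank K L = p ^ n := by
    rw [← IsGalois.card_aut_eq_finrank, hcard]
  rw [← hminpoly]
  exact ⟨fun i => ⟨_, (coeff_map _ i).symm⟩, (minpoly.monic (.of_finite K y)).map _,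
    by rw [natDegree_map, hdegree], hfinrank, rfl,
    (Field.primitive_element_iff_minpoly_natDegree_eq K y).mpr (hdegree.trans hfinrank.symm)⟩
end

section
/- Let p be a prime, i ≥ 1, and let G be a cyclic group of order p^i with generator σ. Let A be an abelian group with p·A = 0, equipped with an action of G by additive automorphisms such that σ^{p^{i−1}} acts trivially on A. Then the first group cohomology H^1(G, A) is isomorphic, as an abelian group, to the coinvariants A_G = A / {σ·a − a : a ∈ A}. -/
section Defs

variable (G : Type*) [Group G] (A : Type*) [AddCommGroup A] [DistribMulAction G A]

/-- The group of 1-cocycles `d : G → A`, i.e. functions with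
`d (g * h) = d g + g • d h`. -/
def oneCocycles : AddSubgroup (G → A) where
  carrier := {d | ∀ g h : G, d (g * h) = d g + g • d h}
  add_mem' := by
    intro d e hd he g h
    simp only [Pi.add_apply, hd g h, he g h, smul_add]
    abel
  zero_mem' := by intro g h; simp
  neg_mem' := by
    intro d hd g h
    simp only [Pi.neg_apply, hd g h, smul_neg]
    abel

/-- The group of 1-coboundaries, i.e. functions of the form `g ↦ g • b - b`. -/
def oneCoboundaries : AddSubgroup (G → A) where
  carrier := {d | ∃ b : A, ∀ g : G, d g = g • b - b}
  add_mem' := by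
    rintro d e ⟨b, hb⟩ ⟨c, hc⟩
    refine ⟨b + c, fun g => ?_⟩
    simp only [Pi.add_apply, hb g, hc g, smul_add]
    abel
  zero_mem' := ⟨0, by simp⟩
  neg_mem' := by
    rintro d ⟨b, hb⟩
    refine ⟨-b, fun g => ?_⟩
    simp only [Pi.neg_apply, hb g, smul_neg]
    abel

/-- The first group cohomology `H¹(G, A)`: 1-cocycles modulo 1-coboundaries. -/
def H1 : Type _ :=
  oneCocycles G A ⧸ (oneCoboundaries G A).addSubgroupOf (oneCocycles G A)

noncomputable instance : AddCommGroup (H1 G A) :=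
  QuotientAddGroup.Quotient.addCommGroup _

/-- The coinvariants `A_G = A / ⟨g • a - a⟩`. -/
def coinvariants : Type _ :=
  A ⧸ AddSubgroup.closure {x : A | ∃ (g : G) (a : A), x = g • a - a}

noncomputable instance : AddCommGroup (coinvariants G A) :=
  QuotientAddGroup.Quotient.addCommGroup _

end Defs

/-!
A cocycle `d` on a cyclic group `⟨σ⟩` is determined by `d σ`, and `d` is a coboundary exactly when
`d σ` lies in `(σ - 1) A`, which is also the subgroup defining the coinvariants. So `d ↦ d σ`
embeds `H¹(G, A)` into `A_G`, and its image consists of the classes of the values `d σ` that occur.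

These values are found by regarding a cocycle as an action of `G` on `A` by affine maps
`x ↦ d g + g • x`: such an action with `d σ = a` exists as soon as the `n`-th power of
`x ↦ a + σ • x` is the identity, where `n = orderOf σ`. That power is translation by the norm
`∑ j < n, σ ^ j • a` (an empty sum when `σ` has infinite order, since then `n = 0`). If `σ ^ m`
acts trivially and `n = m * p`, the norm is `p` times a shorter sum, so it vanishes when `p`
kills `A`.
-/

theorem sum_range_mul_pow_smul {M A : Type*} [Monoid M] [AddCommMonoid A] [MulAction M A]
    {σ : M} {a : A} {m : ℕ} (h : σ ^ m • a = a) (n : ℕ) :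
    ∑ j ∈ Finset.range (m * n), σ ^ j • a = n • ∑ j ∈ Finset.range m, σ ^ j • a := by
  induction n with
  | zero => simp
  | succ n ih =>
    have shift (j : ℕ) : σ ^ (m + j) • a = σ ^ j • a := by
      rw [add_comm, pow_add, mul_smul, h]
    rw [Nat.mul_succ, add_comm (m * n), Finset.sum_range_add]
    simp only [shift]
    rw [ih, succ_nsmul']

section Affine

variable {G A : Type*} [Group G] [AddCommGroup A] [DistribMulAction G A] {σ : G}

/-- The affine permutation `x ↦ a + σ • x` of `A`, through which a generator `σ` acts in the affine
action attached to a cocycle with value `a` at `σ`. -/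
def affinePerm (σ : G) (a : A) : Equiv.Perm A :=
  (MulAction.toPerm σ).trans (Equiv.addLeft a)

@[simp]
theorem affinePerm_apply (σ : G) (a x : A) : affinePerm σ a x = a + σ • x :=
  rfl

theorem affinePerm_pow_apply (σ : G) (a x : A) (n : ℕ) :
    (affinePerm σ a ^ n) x = ∑ j ∈ Finset.range n, σ ^ j • a + σ ^ n • x := by
  induction n generalizing x with
  | zero => simp
  | succ n ih =>
    rw [pow_succ, Equiv.Perm.mul_apply, ih, affinePerm_apply, smul_add, Finset.sum_range_succ,
      pow_succ, mul_smul, add_assoc]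

theorem orderOf_affinePerm_dvd {a : A}
    (hnorm : ∑ j ∈ Finset.range (orderOf σ), σ ^ j • a = 0) :
    orderOf (affinePerm σ a) ∣ orderOf σ := by
  refine orderOf_dvd_of_pow_eq_one (Equiv.ext fun x => ?_)
  rw [affinePerm_pow_apply, hnorm, pow_orderOf_eq_one, one_smul, zero_add, Equiv.Perm.one_apply]

theorem map_sub_map_of_generator (hgen : ∀ g : G, g ∈ Subgroup.zpowers σ)
    {Φ : G →* Equiv.Perm A} (hσ : ∀ x y : A, Φ σ x - Φ σ y = σ • (x - y)) (g : G) (x y : A) :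
    Φ g x - Φ g y = g • (x - y) := by
  let S : Subgroup G :=
    { carrier := {g | ∀ x y : A, Φ g x - Φ g y = g • (x - y)}
      one_mem' := by simp
      mul_mem' := fun {g h} hg hh x y => by
        rw [map_mul, Equiv.Perm.mul_apply, Equiv.Perm.mul_apply, hg, hh, mul_smul]
      inv_mem' := fun {g} hg x y => by
        rw [eq_inv_smul_iff, ← hg, map_inv, Equiv.Perm.inv_def, Equiv.apply_symm_apply,
          Equiv.apply_symm_apply] }
  exact Subgroup.zpowers_le.2 (show σ ∈ S from hσ) (hgen g) x y

theorem apply_zero_mem_oneCocycles {Φ : G →* Equiv.Perm A}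
    (hΦ : ∀ (g : G) (x y : A), Φ g x - Φ g y = g • (x - y)) :
    (fun g => Φ g 0) ∈ oneCocycles G A := fun g h =>
  show Φ (g * h) 0 = Φ g 0 + g • Φ h 0 by
    rw [← sub_eq_iff_eq_add', map_mul, Equiv.Perm.mul_apply, hΦ, sub_zero]

theorem exists_mem_oneCocycles_apply_generator_eq (hgen : ∀ g : G, g ∈ Subgroup.zpowers σ) {a : A}
    (hnorm : ∑ j ∈ Finset.range (orderOf σ), σ ^ j • a = 0) :
    ∃ d ∈ oneCocycles G A, d σ = a := by
  let Φ : G →* Equiv.Perm A := monoidHomOfForallMemZpowers hgen (orderOf_affinePerm_dvd hnorm)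
  have hΦσ : Φ σ = affinePerm σ a := monoidHomOfForallMemZpowers_apply_gen hgen _
  have hΦ : ∀ (g : G) (x y : A), Φ g x - Φ g y = g • (x - y) :=
    map_sub_map_of_generator hgen fun x y => by simp [hΦσ, smul_sub]
  exact ⟨_, apply_zero_mem_oneCocycles hΦ, by simp [hΦσ]⟩

end Affine

section Cocycles

variable {G A : Type*} [Group G] [AddCommGroup A] [DistribMulAction G A] {σ : G} {d e : G → A}

theorem map_one_of_mem_oneCocycles (hd : d ∈ oneCocycles G A) : d 1 = 0 := by
  simpa using hd 1 1

theorem map_inv_of_mem_oneCocycles (hd : d ∈ oneCocycles G A) (g : G) :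
    d g⁻¹ = -(g⁻¹ • d g) := by
  rw [eq_neg_iff_add_eq_zero, ← hd, inv_mul_cancel, map_one_of_mem_oneCocycles hd]

theorem eq_of_mem_oneCocycles_of_generator (hgen : ∀ g : G, g ∈ Subgroup.zpowers σ)
    (hd : d ∈ oneCocycles G A) (he : e ∈ oneCocycles G A) (h : d σ = e σ) : d = e := by
  let S : Subgroup G :=
    { carrier := {g | d g = e g}
      one_mem' := (map_one_of_mem_oneCocycles hd).trans (map_one_of_mem_oneCocycles he).symm
      mul_mem' := fun {g k} (hg : d g = e g) (hk : d k = e k) =>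
        show d (g * k) = e (g * k) by rw [hd, he, hg, hk]
      inv_mem' := fun {g} (hg : d g = e g) =>
        show d g⁻¹ = e g⁻¹ by
          rw [map_inv_of_mem_oneCocycles hd, map_inv_of_mem_oneCocycles he, hg] }
  exact funext fun g => Subgroup.zpowers_le.2 (show σ ∈ S from h) (hgen g)

theorem smul_sub_mem_oneCocycles (b : A) : (fun g : G => g • b - b) ∈ oneCocycles G A :=
  fun g h =>
    show (g * h) • b - b = g • b - b + g • (h • b - b) by
      rw [mul_smul, smul_sub, sub_add_sub_cancel']

theorem mem_oneCoboundaries_iff_of_generator (hgen : ∀ g : G, g ∈ Subgroup.zpowers σ)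
    (hd : d ∈ oneCocycles G A) :
    d ∈ oneCoboundaries G A ↔ ∃ b : A, d σ = σ • b - b := by
  refine ⟨fun ⟨b, hb⟩ => ⟨b, hb σ⟩, fun ⟨b, hb⟩ => ⟨b, fun g => ?_⟩⟩
  exact congrFun
    (eq_of_mem_oneCocycles_of_generator hgen hd (smul_sub_mem_oneCocycles b) hb) g

end Cocycles

namespace coinvariants

variable {G A : Type*} [Group G] [AddCommGroup A] [DistribMulAction G A] {σ : G}

variable (G A) in
/-- The quotient map `A → A_G`. -/
noncomputable def mk : A →+ coinvariants G A :=
  QuotientAddGroup.mk' _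

theorem mk_surjective : Function.Surjective (mk G A) :=
  QuotientAddGroup.mk'_surjective _

theorem mk_smul_sub (g : G) (b : A) : mk G A (g • b - b) = 0 :=
  (QuotientAddGroup.eq_zero_iff _).2 (AddSubgroup.subset_closure ⟨g, b, rfl⟩)

theorem exists_smul_sub_eq_of_generator (hgen : ∀ g : G, g ∈ Subgroup.zpowers σ) (g : G) (a : A) :
    ∃ b : A, g • a - a = σ • b - b := by
  let R : AddSubgroup A := (DistribSMul.toAddMonoidHom A σ - AddMonoidHom.id A).range
  let S : Subgroup G :=
    { carrier := {g | ∀ a : A, g • a - a ∈ R}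
      one_mem' := fun a => by simp
      mul_mem' := fun {g h} hg hh a => by
        rw [mul_smul, ← sub_add_sub_cancel _ (h • a)]
        exact R.add_mem (hg _) (hh a)
      inv_mem' := fun {g} hg a => by
        rw [← neg_sub, R.neg_mem_iff]
        simpa using hg (g⁻¹ • a) }
  have hσ : σ ∈ S := fun b => ⟨b, rfl⟩
  obtain ⟨b, hb⟩ := Subgroup.zpowers_le.2 hσ (hgen g) a
  exact ⟨b, hb.symm⟩

theorem mk_eq_zero_iff_of_generator (hgen : ∀ g : G, g ∈ Subgroup.zpowers σ) {a : A} :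
    mk G A a = 0 ↔ ∃ b : A, a = σ • b - b := by
  let R : AddSubgroup A := (DistribSMul.toAddMonoidHom A σ - AddMonoidHom.id A).range
  refine ⟨fun h => ?_, ?_⟩
  · have hle : AddSubgroup.closure {x : A | ∃ (g : G) (a : A), x = g • a - a} ≤ R := by
      rw [AddSubgroup.closure_le]
      rintro _ ⟨g, a, rfl⟩
      obtain ⟨b, hb⟩ := exists_smul_sub_eq_of_generator hgen g a
      exact ⟨b, hb.symm⟩
    obtain ⟨b, hb⟩ := hle ((QuotientAddGroup.eq_zero_iff a).1 h)
    exact ⟨b, hb.symm⟩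
  · rintro ⟨b, rfl⟩
    exact mk_smul_sub σ b

end coinvariants

section Evaluation

variable {G A : Type*} [Group G] [AddCommGroup A] [DistribMulAction G A] {σ : G}

variable (A) in
/-- Evaluation of cocycles at `σ`, taken modulo the relations defining the coinvariants. -/
noncomputable def evalCoinvariants (σ : G) : oneCocycles G A →+ coinvariants G A :=
  (coinvariants.mk G A).comp
    ((Pi.evalAddMonoidHom (fun _ : G => A) σ).comp (oneCocycles G A).subtype)

theorem evalCoinvariants_apply (d : oneCocycles G A) :
    evalCoinvariants A σ d = coinvariants.mk G A (d.1 σ) :=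
  rfl

theorem ker_evalCoinvariants_of_generator (hgen : ∀ g : G, g ∈ Subgroup.zpowers σ) :
    (evalCoinvariants A σ).ker = (oneCoboundaries G A).addSubgroupOf (oneCocycles G A) := by
  ext d
  rw [AddMonoidHom.mem_ker, evalCoinvariants_apply, coinvariants.mk_eq_zero_iff_of_generator hgen,
    AddSubgroup.mem_addSubgroupOf, mem_oneCoboundaries_iff_of_generator hgen d.2]

theorem evalCoinvariants_surjective_of_generator (hgen : ∀ g : G, g ∈ Subgroup.zpowers σ)
    (hnorm : ∀ a : A, ∑ j ∈ Finset.range (orderOf σ), σ ^ j • a = 0) :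
    Function.Surjective (evalCoinvariants A σ) := by
  intro q
  obtain ⟨a, rfl⟩ := coinvariants.mk_surjective q
  obtain ⟨d, hd, rfl⟩ := exists_mem_oneCocycles_apply_generator_eq hgen (hnorm a)
  exact ⟨⟨d, hd⟩, rfl⟩

theorem H1_iso_coinvariants_general (hgen : ∀ g : G, g ∈ Subgroup.zpowers σ)
    (hnorm : ∀ a : A, ∑ j ∈ Finset.range (orderOf σ), σ ^ j • a = 0) :
    Nonempty (H1 G A ≃+ coinvariants G A) :=
  ⟨QuotientAddGroup.liftEquiv _ (evalCoinvariants_surjective_of_generator hgen hnorm)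
    (ker_evalCoinvariants_of_generator hgen).symm⟩

end Evaluation

/-- Let `p` be a prime, `i ≥ 1`, and `G` cyclic of order `p^i` with
generator `σ`.  Let `A` be an abelian group with `p • A = 0` and a `G`-action by
additive automorphisms such that `σ^(p^(i-1))` acts trivially.  Then
`H¹(G, A) ≅ A_G` (the coinvariants) as abelian groups. -/
theorem H1_iso_coinvariants
    (p i : ℕ) [Fact p.Prime] (hi : 1 ≤ i)
    (G : Type*) [Group G] (σ : G)
    (hord : orderOf σ = p ^ i) (hgen : ∀ g : G, g ∈ Subgroup.zpowers σ)
    (A : Type*) [AddCommGroup A] [DistribMulAction G A]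
    (hpA : ∀ a : A, p • a = 0)
    (htriv : ∀ a : A, σ ^ p ^ (i - 1) • a = a) :
    Nonempty (H1 G A ≃+ coinvariants G A) := by
  refine H1_iso_coinvariants_general hgen fun a => ?_
  rw [hord, ← pow_sub_one_mul (by lia) p, sum_range_mul_pow_smul (htriv a), hpA]
end
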